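/- arXiv:1305.3782 — 3 statements merged into one kernel-verified Lean document; each statement's English description precedes it below -/
import Mathlib

section
/- Let P₁ ⊆ ℝ^{n₁} × ℝ^{d₁} and P₂ ⊆ ℝ^{n₂} × ℝ^{d₂} be polytopes, let f : ℝ^{n₁} × ℝ^{n₂} → ℝⁿ ∪ {∞} be a partial function, and define P₃ := conv{(γ, α, β) : α ∈ vert(p_α(P₁)), β ∈ vert(p_β(P₂)), γ = f(α, β) ≠ ∞} and Q := {(γ, α, x, β, y) : (α, x) ∈ P₁, (β, y) ∈ P₂, (γ, α, β) ∈ P₃}. If (P₁, p_α) and (P₂, p_β) have the PF-property and every vertex of P₃ is mapped by the projection p_γ (onto the first n coordinates) to a vertex of p_γ(P₃), then the pair (Q, p_{γ,α,β}) has the PF-property, where p_{γ,α,β}(γ, α, x, β, y) := (γ, α, β). -/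
open Set

/-!
For a point `z` of a polytope `P`, the smallest face containing `z` consists of the `w ∈ P` such
that the segment from `w` to `z` can be prolonged beyond `z` inside `P`. A projection maps faces to
faces exactly when, at every `z ∈ P`, the smallest face of the image at the image of `z` lifts to
the smallest face of `P` at `z`. In this local form the property passes from `P₁` and `P₂` to
`P₁ × P₂`, and from there to a fiber product with a polytope lying over the image of `P₁ × P₂`,
because prolonging a segment in a product or an intersection can be done one factor at a time.
-/

section OrderedField

variable {𝕜 E F : Type*} [Field 𝕜] [LinearOrder 𝕜]
  [AddCommGroup E] [Module 𝕜 E] [AddCommGroup F] [Module 𝕜 F]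

variable (𝕜) in
/-- The smallest face of a convex set `P` containing a point `z ∈ P`, encoded through segments so
that it can be computed in products and preimages. -/
def smallestFace (P : Set E) (z : E) : Set E :=
  {w | w ∈ P ∧ ∃ y ∈ P, z ∈ openSegment 𝕜 w y}

lemma smallestFace_subset_of_isExtreme {P A : Set E} {z : E} (hA : IsExtreme 𝕜 P A) (hz : z ∈ A) :
    smallestFace 𝕜 P z ⊆ A :=
  fun _ ⟨hw, _, hy, hzwy⟩ => hA.left_mem_of_mem_openSegment hw hy hz hzwy

variable [IsStrictOrderedRing 𝕜]

lemma mem_openSegment_iff_exists_right_eq {w y z : E} :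
    z ∈ openSegment 𝕜 w y ↔ ∃ t : 𝕜, 0 < t ∧ y = z + t • (z - w) := by
  constructor
  · rintro ⟨a, b, ha, hb, hab, rfl⟩
    refine ⟨a / b, by positivity, ?_⟩
    obtain rfl : a = 1 - b := by linarith
    match_scalars <;> field_simp <;> ring
  · rintro ⟨t, ht, rfl⟩
    refine ⟨t / (1 + t), 1 / (1 + t), by positivity, by positivity, by field_simp; ring, ?_⟩
    match_scalars <;> field_simp
    ring

lemma self_mem_smallestFace {P : Set E} {z : E} (hz : z ∈ P) : z ∈ smallestFace 𝕜 P z :=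
  ⟨hz, z, hz, by simp⟩

lemma mem_smallestFace_iff {P : Set E} {w z : E} :
    w ∈ smallestFace 𝕜 P z ↔ w ∈ P ∧ ∃ t : 𝕜, 0 < t ∧ z + t • (z - w) ∈ P := by
  refine and_congr_right fun _ => ?_
  simp only [mem_openSegment_iff_exists_right_eq]
  constructor
  · rintro ⟨_, hy, t, ht, rfl⟩
    exact ⟨t, ht, hy⟩
  · rintro ⟨t, ht, hy⟩
    exact ⟨_, hy, t, ht, rfl⟩

lemma isExtreme_smallestFace {P : Set E} (hP : Convex 𝕜 P) (z : E) :
    IsExtreme 𝕜 P (smallestFace 𝕜 P z) := by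
  refine ⟨fun _ hw => hw.1, ?_⟩
  rintro x hx y hy _ ⟨-, w', hw', c, d, hc, hd, hcd, rfl⟩ ⟨a, b, ha, hb, hab, rfl⟩
  -- In `c (a x + b y) + d w'` the last two terms combine to a multiple of a point of `P`.
  have hpos : 0 < c * b + d := by positivity
  refine ⟨hx, (c * b / (c * b + d)) • y + (d / (c * b + d)) • w',
    convex_iff_div.1 hP hy hw' (by positivity) hd.le hpos, c * a, c * b + d, by positivity, hpos,
    by linear_combination c * hab + hcd, ?_⟩
  match_scalars <;> field_simp

lemma add_smul_sub_mem_of_le {P : Set E} (hP : Convex 𝕜 P) {w z : E} (hz : z ∈ P) {s t : 𝕜}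
    (hs : 0 ≤ s) (hst : s ≤ t) (ht : z + t • (z - w) ∈ P) : z + s • (z - w) ∈ P := by
  rcases hs.eq_or_lt with rfl | hs
  · simpa using hz
  have htpos : 0 < t := hs.trans_le hst
  have hmem := hP.add_smul_mem hz ht (t := s / t) ⟨by positivity, (div_le_one htpos).2 hst⟩
  rwa [smul_smul, div_mul_cancel₀ _ htpos.ne'] at hmem

lemma smallestFace_inter {A B : Set E} (hA : Convex 𝕜 A) (hB : Convex 𝕜 B) {z : E}
    (hzA : z ∈ A) (hzB : z ∈ B) :
    smallestFace 𝕜 (A ∩ B) z = smallestFace 𝕜 A z ∩ smallestFace 𝕜 B z := by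
  ext w
  simp only [mem_inter_iff, mem_smallestFace_iff]
  constructor
  · rintro ⟨⟨hwA, hwB⟩, t, ht, htA, htB⟩
    exact ⟨⟨hwA, t, ht, htA⟩, hwB, t, ht, htB⟩
  · rintro ⟨⟨hwA, s, hs, hsA⟩, hwB, t, ht, htB⟩
    have hmin : 0 < min s t := lt_min hs ht
    exact ⟨⟨hwA, hwB⟩, min s t, hmin,
      add_smul_sub_mem_of_le hA hzA hmin.le (min_le_left _ _) hsA,
      add_smul_sub_mem_of_le hB hzB hmin.le (min_le_right _ _) htB⟩

lemma convex_smallestFace {P : Set E} (hP : Convex 𝕜 P) {z : E} (hz : z ∈ P) :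
    Convex 𝕜 (smallestFace 𝕜 P z) := by
  intro w₁ hw₁ w₂ hw₂ a b ha hb hab
  obtain ⟨hw₁P, s, hs, hsP⟩ := mem_smallestFace_iff.1 hw₁
  obtain ⟨hw₂P, t, ht, htP⟩ := mem_smallestFace_iff.1 hw₂
  have hmin : 0 < min s t := lt_min hs ht
  refine mem_smallestFace_iff.2 ⟨hP hw₁P hw₂P ha hb hab, min s t, hmin, ?_⟩
  convert hP (add_smul_sub_mem_of_le hP hz hmin.le (min_le_left s t) hsP)
    (add_smul_sub_mem_of_le hP hz hmin.le (min_le_right s t) htP) ha hb hab using 1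
  obtain rfl : a = 1 - b := by linarith
  module

lemma smallestFace_preimage (f : E →ₗ[𝕜] F) (A : Set F) (z : E) :
    smallestFace 𝕜 (f ⁻¹' A) z = f ⁻¹' smallestFace 𝕜 A (f z) := by
  ext w
  simp only [mem_preimage, mem_smallestFace_iff, map_add, map_smul, map_sub]

lemma map_mem_smallestFace (f : E →ₗ[𝕜] F) {A : Set E} {B : Set F} (hf : MapsTo f A B) {w z : E}
    (hw : w ∈ smallestFace 𝕜 A z) : f w ∈ smallestFace 𝕜 B (f z) := by
  obtain ⟨hwA, t, ht, htA⟩ := mem_smallestFace_iff.1 hw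
  refine mem_smallestFace_iff.2 ⟨hf hwA, t, ht, ?_⟩
  simpa only [map_add, map_smul, map_sub] using hf htA

lemma smallestFace_prod {A : Set E} {B : Set F} (hA : Convex 𝕜 A) (hB : Convex 𝕜 B) {z : E × F}
    (hz : z ∈ A ×ˢ B) :
    smallestFace 𝕜 (A ×ˢ B) z = smallestFace 𝕜 A z.1 ×ˢ smallestFace 𝕜 B z.2 := by
  have hinter := smallestFace_inter (hA.linear_preimage (LinearMap.fst 𝕜 E F))
    (hB.linear_preimage (LinearMap.snd 𝕜 E F)) hz.1 hz.2
  rwa [smallestFace_preimage, smallestFace_preimage] at hinter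

lemma exists_smul_sub_of_mem_vectorSpan {C : Set E} (hC : Convex 𝕜 C) (hne : C.Nonempty) {v : E}
    (hv : v ∈ vectorSpan 𝕜 C) : ∃ t : 𝕜, 0 < t ∧ ∃ p ∈ C, ∃ q ∈ C, v = t • (p - q) := by
  obtain ⟨x, hx⟩ := hne
  induction hv using Submodule.span_induction with
  | mem v hv =>
    obtain ⟨p, hp, q, hq, rfl⟩ := hv
    exact ⟨1, one_pos, p, hp, q, hq, by simp⟩
  | zero => exact ⟨1, one_pos, x, hx, x, hx, by simp⟩
  | add v w _ _ hv hw =>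
    obtain ⟨s, hs, p, hp, q, hq, rfl⟩ := hv
    obtain ⟨t, ht, p', hp', q', hq', rfl⟩ := hw
    have hst : 0 < s + t := by positivity
    refine ⟨s + t, hst, _, convex_iff_div.1 hC hp hp' hs.le ht.le hst,
      _, convex_iff_div.1 hC hq hq' hs.le ht.le hst, ?_⟩
    match_scalars <;> field_simp
  | smul c v _ hv =>
    obtain ⟨t, ht, p, hp, q, hq, rfl⟩ := hv
    rcases lt_trichotomy c 0 with hc | rfl | hc
    · exact ⟨-c * t, mul_pos (neg_pos.2 hc) ht, q, hq, p, hp, by module⟩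
    · exact ⟨1, one_pos, x, hx, x, hx, by simp⟩
    · exact ⟨c * t, by positivity, p, hp, q, hq, by module⟩

lemma exists_mem_openSegment_of_mem_affineSpan {C : Set E} (hC : Convex 𝕜 C) {w : E}
    (hw : w ∈ affineSpan 𝕜 C) : ∃ x ∈ C, ∃ y ∈ C, x ∈ openSegment 𝕜 w y := by
  obtain ⟨x, hx⟩ : C.Nonempty := (affineSpan_nonempty 𝕜).1 ⟨w, hw⟩
  obtain ⟨t, ht, p, hp, q, hq, hwx⟩ := exists_smul_sub_of_mem_vectorSpan hC ⟨x, hx⟩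
    (vsub_mem_vectorSpan_of_mem_affineSpan_of_mem_affineSpan hw (subset_affineSpan 𝕜 C hx))
  obtain rfl : w = t • (p - q) + x := by rw [← hwx, vsub_eq_sub, sub_add_cancel]
  -- `w = x + t (p - q)` rearranges to `w + t q = x + t p`; divide by `1 + t`.
  refine ⟨_, convex_iff_div.1 hC hx hp zero_le_one ht.le (by positivity), q, hq,
    1 / (1 + t), t / (1 + t), by positivity, by positivity, by field_simp, ?_⟩
  match_scalars <;> field_simp
  ring

lemma affineSpan_inter_subset_of_isExtreme {P A : Set E} (hA : IsExtreme 𝕜 P A)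
    (hAc : Convex 𝕜 A) : (affineSpan 𝕜 A : Set E) ∩ P ⊆ A := by
  rintro w ⟨hwA, hwP⟩
  obtain ⟨x, hx, y, hy, hxwy⟩ := exists_mem_openSegment_of_mem_affineSpan hAc hwA
  exact hA.left_mem_of_mem_openSegment hwP (hA.subset hy) hx hxwy

lemma subset_convexHull_inter_of_isExtreme {S A : Set E} (hA : IsExtreme 𝕜 (convexHull 𝕜 S) A) :
    A ⊆ convexHull 𝕜 (S ∩ A) := by
  have hsub : convexHull 𝕜 S ⊆ {w | w ∈ convexHull 𝕜 S ∧ (w ∈ A → w ∈ convexHull 𝕜 (S ∩ A))} := by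
    refine convexHull_min
      (fun s hs => ⟨subset_convexHull 𝕜 S hs, fun hsA => subset_convexHull 𝕜 _ ⟨hs, hsA⟩⟩)
      (convex_iff_openSegment_subset.2 ?_)
    rintro x ⟨hx, hxA⟩ y ⟨hy, hyA⟩ z hz
    refine ⟨(convex_convexHull 𝕜 S).openSegment_subset hx hy hz, fun hzA => ?_⟩
    exact (convex_convexHull 𝕜 _).openSegment_subset
      (hxA (hA.left_mem_of_mem_openSegment hx hy hzA hz))
      (hyA (hA.right_mem_of_mem_openSegment hx hy hzA hz)) hz
  exact fun w hw => (hsub (hA.subset hw)).2 hw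

lemma eq_of_forall_le_affineSubspace {A : AffineSubspace 𝕜 E} (l : E →ₗ[𝕜] 𝕜) {c : 𝕜}
    (hl : ∀ x ∈ A, c ≤ l x) {x y : E} (hx : x ∈ A) (hy : y ∈ A) : l x = l y := by
  by_contra hne
  have hdiff : l y - l x ≠ 0 := sub_ne_zero.2 (Ne.symm hne)
  have hlow := hl _ (AffineMap.lineMap_mem ((c - 1 - l x) / (l y - l x)) hx hy)
  rw [AffineMap.lineMap_apply_module', map_add, map_smul, map_sub, smul_eq_mul,
    div_mul_cancel₀ _ hdiff] at hlow
  linarith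

end OrderedField

lemma finite_setOf_eq_some {α β : Type*} {S : Set α} (hS : S.Finite) (f : α → Option β) :
    {q : β × α | q.2 ∈ S ∧ f q.2 = some q.1}.Finite := by
  refine Set.Finite.of_finite_image (f := Prod.snd) (hS.subset ?_) ?_
  · rintro _ ⟨q, hq, rfl⟩
    exact hq.1
  · rintro ⟨b, a⟩ hq ⟨b', _⟩ hq' rfl
    have hb : b = b' := Option.some_injective _ (hq.2.symm.trans hq'.2)
    rw [hb]

/-- A polytope: the convex hull of a finite set. -/
def IsPolytope {E : Type*} [AddCommGroup E] [Module ℝ E] (P : Set E) : Prop :=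
  ∃ s : Set E, s.Finite ∧ P = convexHull ℝ s

namespace IsPolytope

variable {E F : Type*} [AddCommGroup E] [Module ℝ E] [AddCommGroup F] [Module ℝ F]

lemma convex {P : Set E} (hP : IsPolytope P) : Convex ℝ P := by
  obtain ⟨s, -, rfl⟩ := hP
  exact convex_convexHull ℝ s

lemma image {P : Set E} (hP : IsPolytope P) (f : E →ₗ[ℝ] F) : IsPolytope (f '' P) := by
  obtain ⟨s, hs, rfl⟩ := hP
  exact ⟨f '' s, hs.image f, f.image_convexHull s⟩

lemma prod {P : Set E} {P' : Set F} (hP : IsPolytope P) (hP' : IsPolytope P') :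
    IsPolytope (P ×ˢ P') := by
  obtain ⟨s, hs, rfl⟩ := hP
  obtain ⟨s', hs', rfl⟩ := hP'
  exact ⟨s ×ˢ s', hs.prod hs', (convexHull_prod s s').symm⟩

lemma finite_extremePoints {P : Set E} (hP : IsPolytope P) : (P.extremePoints ℝ).Finite := by
  obtain ⟨s, hs, rfl⟩ := hP
  exact hs.subset extremePoints_convexHull_subset

variable [TopologicalSpace E] [IsTopologicalAddGroup E] [ContinuousSMul ℝ E] [T2Space E]

lemma isClosed_affineSpan {P A : Set E} (hP : IsPolytope P) (hAP : A ⊆ P) :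
    IsClosed (affineSpan ℝ A : Set E) := by
  obtain ⟨s, hs, rfl⟩ := hP
  have hle : affineSpan ℝ A ≤ affineSpan ℝ s :=
    affineSpan_le.2 (hAP.trans (convexHull_subset_affineSpan s))
  have := finiteDimensional_direction_affineSpan_of_finite ℝ hs
  have := Submodule.finiteDimensional_of_le (AffineSubspace.direction_le hle)
  rcases A.eq_empty_or_nonempty with rfl | ⟨x, hx⟩
  · simp
  have hpre : (affineSpan ℝ A : Set E) = (· - x) ⁻¹' (affineSpan ℝ A).direction := by
    ext w
    exact (AffineSubspace.vsub_right_mem_direction_iff_mem (subset_affineSpan ℝ A hx) w).symm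
  rw [hpre]
  exact (Submodule.closed_of_finiteDimensional _).preimage (continuous_id.sub continuous_const)

/-- The functional exposing `A` strictly separates the hull of the vertices outside `A` from the
affine span of `A`, on which it is constant because it is bounded below there. -/
theorem isExposed_of_isExtreme [LocallyConvexSpace ℝ E] {P A : Set E} (hP : IsPolytope P)
    (hA : IsExtreme ℝ P A) (hAc : Convex ℝ A) : IsExposed ℝ P A := by
  rintro ⟨z, hz⟩
  have hclosed := hP.isClosed_affineSpan hA.subset
  obtain ⟨s, hs, rfl⟩ := hP
  have hsdiff : convexHull ℝ (s \ A) ⊆ convexHull ℝ s \ A :=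
    convexHull_min (sdiff_subset_sdiff_left (subset_convexHull ℝ s))
      (hA.convex_sdiff (convex_convexHull ℝ s))
  have hdisj : Disjoint (convexHull ℝ (s \ A)) (affineSpan ℝ A : Set E) :=
    disjoint_left.2 fun w hw hwA =>
      (hsdiff hw).2 (affineSpan_inter_subset_of_isExtreme hA hAc ⟨hwA, (hsdiff hw).1⟩)
  obtain ⟨l, u, v, hlu, huv, hvl⟩ := geometric_hahn_banach_compact_closed
    (convex_convexHull ℝ _) ((hs.subset sdiff_subset).isCompact_convexHull ℝ)
    (affineSpan ℝ A).convex hclosed hdisj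
  have hspan : ∀ w ∈ A, w ∈ affineSpan ℝ A := fun w hw => subset_affineSpan ℝ A hw
  have hconst : ∀ w ∈ A, l w = l z := fun w hw =>
    eq_of_forall_le_affineSubspace l.toLinearMap (fun x hx => (hvl x hx).le) (hspan w hw)
      (hspan z hz)
  have hlt : ∀ w ∈ s, w ∉ A → l w < l z := fun w hw hwA =>
    (hlu w (subset_convexHull ℝ _ ⟨hw, hwA⟩)).trans (huv.trans (hvl z (hspan z hz)))
  have hle : ∀ w ∈ convexHull ℝ s, l w ≤ l z := by
    refine convexHull_min (fun w hw => ?_) (convex_halfSpace_le l.toLinearMap.isLinear (l z))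
    by_cases hwA : w ∈ A
    exacts [(hconst w hwA).le, (hlt w hw hwA).le]
  refine ⟨l, Subset.antisymm
    (fun w hw => ⟨hA.subset hw, fun y hy => (hconst w hw).symm ▸ hle y hy⟩) ?_⟩
  have hexp : IsExposed ℝ (convexHull ℝ s) (l.toExposed (convexHull ℝ s)) :=
    ContinuousLinearMap.toExposed.isExposed
  refine (subset_convexHull_inter_of_isExtreme hexp.isExtreme).trans (convexHull_min ?_ hAc)
  rintro w ⟨hws, -, hwmax⟩
  by_contra hwA
  exact (hlt w hws hwA).not_ge (hwmax z (hA.subset hz))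

end IsPolytope

/-- The projected faces property of the pair `(P, π)`: every exposed face of `P` is mapped by `π`
to an exposed face of `π '' P`. -/
def ProjectsFaces {V W : Type*} [AddCommGroup V] [Module ℝ V] [TopologicalSpace V]
    [AddCommGroup W] [Module ℝ W] [TopologicalSpace W] (π : V →ₗ[ℝ] W) (P : Set V) : Prop :=
  ∀ A : Set V, IsExposed ℝ P A → IsExposed ℝ (π '' P) (π '' A)

namespace ProjectsFaces

section Local

variable {V W : Type*} [AddCommGroup V] [Module ℝ V] [TopologicalSpace V]
  [AddCommGroup W] [Module ℝ W] [TopologicalSpace W] {π : V →ₗ[ℝ] W} {P : Set V}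

lemma smallestFace_subset_image [IsTopologicalAddGroup V] [ContinuousSMul ℝ V] [T2Space V]
    [LocallyConvexSpace ℝ V] (hπ : ProjectsFaces π P) (hP : IsPolytope P) {z : V} (hz : z ∈ P) :
    smallestFace ℝ (π '' P) (π z) ⊆ π '' smallestFace ℝ P z := by
  have hface := hP.isExposed_of_isExtreme (isExtreme_smallestFace hP.convex z)
    (convex_smallestFace hP.convex hz)
  exact smallestFace_subset_of_isExtreme (hπ _ hface).isExtreme
    (mem_image_of_mem π (self_mem_smallestFace hz))

lemma of_smallestFace_subset_image [IsTopologicalAddGroup W] [ContinuousSMul ℝ W] [T2Space W]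
    [LocallyConvexSpace ℝ W] (hP : Convex ℝ P) (hπP : IsPolytope (π '' P))
    (hlift : ∀ z ∈ P, smallestFace ℝ (π '' P) (π z) ⊆ π '' smallestFace ℝ P z) :
    ProjectsFaces π P := by
  intro A hA
  refine hπP.isExposed_of_isExtreme ⟨image_mono hA.subset, ?_⟩ ((hA.convex hP).linear_image π)
  rintro u hu v hv _ ⟨z, hz, rfl⟩ hzuv
  have hlifted : u ∈ π '' smallestFace ℝ P z := hlift z (hA.subset hz) ⟨hu, v, hv, hzuv⟩
  exact image_mono (smallestFace_subset_of_isExtreme hA.isExtreme hz) hlifted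

end Local

section Constructions

variable {G V W V' W' : Type*}
  [AddCommGroup G] [Module ℝ G] [TopologicalSpace G] [IsTopologicalAddGroup G] [ContinuousSMul ℝ G]
  [T2Space G] [LocallyConvexSpace ℝ G]
  [AddCommGroup V] [Module ℝ V] [TopologicalSpace V] [IsTopologicalAddGroup V] [ContinuousSMul ℝ V]
  [T2Space V] [LocallyConvexSpace ℝ V]
  [AddCommGroup W] [Module ℝ W] [TopologicalSpace W] [IsTopologicalAddGroup W] [ContinuousSMul ℝ W]
  [T2Space W] [LocallyConvexSpace ℝ W]
  [AddCommGroup V'] [Module ℝ V'] [TopologicalSpace V'] [IsTopologicalAddGroup V']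
  [ContinuousSMul ℝ V'] [T2Space V'] [LocallyConvexSpace ℝ V']
  [AddCommGroup W'] [Module ℝ W'] [TopologicalSpace W'] [IsTopologicalAddGroup W']
  [ContinuousSMul ℝ W'] [T2Space W'] [LocallyConvexSpace ℝ W']
  {π : V →ₗ[ℝ] W} {π' : V' →ₗ[ℝ] W'} {P : Set V} {P' : Set V'}

lemma prodMap (hπ : ProjectsFaces π P) (hπ' : ProjectsFaces π' P') (hP : IsPolytope P)
    (hP' : IsPolytope P') : ProjectsFaces (π.prodMap π') (P ×ˢ P') := by
  refine of_smallestFace_subset_image (hP.prod hP').convex ((hP.prod hP').image _) fun z hz => ?_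
  have himage (A : Set V) (A' : Set V') : π.prodMap π' '' A ×ˢ A' = (π '' A) ×ˢ (π' '' A') :=
    prodMap_image_prod π π' A A'
  rw [smallestFace_prod hP.convex hP'.convex hz, himage, himage,
    smallestFace_prod (hP.image π).convex (hP'.image π').convex
      ⟨mem_image_of_mem π hz.1, mem_image_of_mem π' hz.2⟩]
  exact prod_mono (hπ.smallestFace_subset_image hP hz.1) (hπ'.smallestFace_subset_image hP' hz.2)

lemma fiberProduct (hπ : ProjectsFaces π P) (hP : IsPolytope P) {R : Set (G × W)}
    (hR : IsPolytope R) (hRP : MapsTo Prod.snd R (π '' P)) :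
    ProjectsFaces (LinearMap.id.prodMap π) {q : G × V | q.2 ∈ P ∧ (q.1, π q.2) ∈ R} := by
  set ρ : G × V →ₗ[ℝ] G × W := LinearMap.id.prodMap π
  set Q : Set (G × V) := {q | q.2 ∈ P ∧ (q.1, π q.2) ∈ R}
  have hsnd : Convex ℝ (LinearMap.snd ℝ G V ⁻¹' P) := hP.convex.linear_preimage _
  have hρ : Convex ℝ (ρ ⁻¹' R) := hR.convex.linear_preimage ρ
  have himage : ρ '' Q = R := by
    refine Subset.antisymm (image_subset_iff.2 fun q hq => hq.2) ?_
    rintro ⟨g, w⟩ hgw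
    obtain ⟨v, hv, rfl⟩ := hRP hgw
    exact ⟨(g, v), ⟨hv, hgw⟩, rfl⟩
  have hface : ∀ z ∈ Q, smallestFace ℝ Q z =
      {q | q.2 ∈ smallestFace ℝ P z.2 ∧ ρ q ∈ smallestFace ℝ R (ρ z)} := by
    intro z hz
    have hinter := smallestFace_inter hsnd hρ hz.1 hz.2
    rwa [smallestFace_preimage, smallestFace_preimage] at hinter
  refine of_smallestFace_subset_image (hsnd.inter hρ) (himage.symm ▸ hR) ?_
  rintro z hz ⟨g, w⟩ hgw
  rw [himage] at hgw
  obtain ⟨v, hv, rfl⟩ := hπ.smallestFace_subset_image hP hz.1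
    (map_mem_smallestFace (LinearMap.snd ℝ G W) hRP hgw)
  exact ⟨(g, v), (hface z hz).symm ▸ ⟨hv, hgw⟩, rfl⟩

end Constructions

end ProjectsFaces

/-- The points `(f(α, β), α, β)` over the pairs of vertices of `A` and `B` at which the partial
function `f` is defined; in Margot's theorem their convex hull is `P₃`. -/
def vertexGraph {G W₁ W₂ : Type*} [AddCommGroup W₁] [Module ℝ W₁] [AddCommGroup W₂] [Module ℝ W₂]
    (f : W₁ × W₂ → Option G) (A : Set W₁) (B : Set W₂) : Set (G × W₁ × W₂) :=
  {q | q.2.1 ∈ A.extremePoints ℝ ∧ q.2.2 ∈ B.extremePoints ℝ ∧ f (q.2.1, q.2.2) = some q.1}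

section VertexGraph

variable {G W₁ W₂ : Type*} [AddCommGroup G] [Module ℝ G] [AddCommGroup W₁] [Module ℝ W₁]
  [AddCommGroup W₂] [Module ℝ W₂] {A : Set W₁} {B : Set W₂}

lemma isPolytope_convexHull_vertexGraph (hA : IsPolytope A) (hB : IsPolytope B)
    (f : W₁ × W₂ → Option G) : IsPolytope (convexHull ℝ (vertexGraph f A B)) := by
  have hfinite := finite_setOf_eq_some (hA.finite_extremePoints.prod hB.finite_extremePoints) f
  exact ⟨_, hfinite.subset fun _ hq => ⟨⟨hq.1, hq.2.1⟩, hq.2.2⟩, rfl⟩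

lemma mapsTo_snd_convexHull_vertexGraph (hA : Convex ℝ A) (hB : Convex ℝ B)
    (f : W₁ × W₂ → Option G) :
    MapsTo Prod.snd (convexHull ℝ (vertexGraph f A B)) (A ×ˢ B) :=
  convexHull_min (fun _ hq => ⟨hq.1.1, hq.2.1.1⟩)
    ((hA.prod hB).linear_preimage (LinearMap.snd ℝ G (W₁ × W₂)))

end VertexGraph

theorem margot_composition_pf_general {G V₁ W₁ V₂ W₂ : Type*}
    [AddCommGroup G] [Module ℝ G] [TopologicalSpace G] [IsTopologicalAddGroup G]
    [ContinuousSMul ℝ G] [T2Space G] [LocallyConvexSpace ℝ G]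
    [AddCommGroup V₁] [Module ℝ V₁] [TopologicalSpace V₁] [IsTopologicalAddGroup V₁]
    [ContinuousSMul ℝ V₁] [T2Space V₁] [LocallyConvexSpace ℝ V₁]
    [AddCommGroup W₁] [Module ℝ W₁] [TopologicalSpace W₁] [IsTopologicalAddGroup W₁]
    [ContinuousSMul ℝ W₁] [T2Space W₁] [LocallyConvexSpace ℝ W₁]
    [AddCommGroup V₂] [Module ℝ V₂] [TopologicalSpace V₂] [IsTopologicalAddGroup V₂]
    [ContinuousSMul ℝ V₂] [T2Space V₂] [LocallyConvexSpace ℝ V₂]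
    [AddCommGroup W₂] [Module ℝ W₂] [TopologicalSpace W₂] [IsTopologicalAddGroup W₂]
    [ContinuousSMul ℝ W₂] [T2Space W₂] [LocallyConvexSpace ℝ W₂]
    {π₁ : V₁ →ₗ[ℝ] W₁} {π₂ : V₂ →ₗ[ℝ] W₂} {P₁ : Set V₁} {P₂ : Set V₂} {P₃ : Set (G × W₁ × W₂)}
    (hP₁ : IsPolytope P₁) (hP₂ : IsPolytope P₂) (hP₃ : IsPolytope P₃)
    (hP₃_snd : MapsTo Prod.snd P₃ ((π₁ '' P₁) ×ˢ (π₂ '' P₂)))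
    (hPF₁ : ProjectsFaces π₁ P₁) (hPF₂ : ProjectsFaces π₂ P₂) :
    ProjectsFaces (LinearMap.id.prodMap (π₁.prodMap π₂))
      {q : G × V₁ × V₂ | q.2.1 ∈ P₁ ∧ q.2.2 ∈ P₂ ∧ (q.1, π₁ q.2.1, π₂ q.2.2) ∈ P₃} := by
  have himage : π₁.prodMap π₂ '' P₁ ×ˢ P₂ = (π₁ '' P₁) ×ˢ (π₂ '' P₂) :=
    prodMap_image_prod π₁ π₂ P₁ P₂
  have hfiber := (hPF₁.prodMap hPF₂ hP₁ hP₂).fiberProduct (hP₁.prod hP₂) hP₃ (himage ▸ hP₃_snd)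
  simpa only [mem_prod, and_assoc, LinearMap.prodMap_apply] using hfiber

/-- Part b) of Margot's theorem.  Given polytopes `P₁ ⊆ ℝ^{n₁} × ℝ^{d₁}`,
`P₂ ⊆ ℝ^{n₂} × ℝ^{d₂}`, a partial composition function
`f : ℝ^{n₁} × ℝ^{n₂} → ℝⁿ ∪ {∞}` (modeled as `Option`-valued), the polytope
`P₃ = conv{(γ,α,β) : α ∈ vert p_α(P₁), β ∈ vert p_β(P₂), γ = f(α,β) ≠ ∞}` and
`Q = {(γ,α,x,β,y) : (α,x) ∈ P₁, (β,y) ∈ P₂, (γ,α,β) ∈ P₃}`: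
if `(P₁, p_α)` and `(P₂, p_β)` have the PF-property and every vertex of `P₃` is projected by
`p_γ` to a vertex of `p_γ(P₃)`, then `(Q, p_{γ,α,β})` has the PF-property. -/
theorem margot_composition_pf {n n₁ d₁ n₂ d₂ : ℕ}
    (P₁ : Set ((Fin n₁ → ℝ) × (Fin d₁ → ℝ)))
    (P₂ : Set ((Fin n₂ → ℝ) × (Fin d₂ → ℝ)))
    (f : (Fin n₁ → ℝ) × (Fin n₂ → ℝ) → Option (Fin n → ℝ))
    (P₃ : Set ((Fin n → ℝ) × (Fin n₁ → ℝ) × (Fin n₂ → ℝ)))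
    (Q : Set ((Fin n → ℝ) × ((Fin n₁ → ℝ) × (Fin d₁ → ℝ)) × ((Fin n₂ → ℝ) × (Fin d₂ → ℝ))))
    (hP₁ : ∃ s : Set ((Fin n₁ → ℝ) × (Fin d₁ → ℝ)), s.Finite ∧ P₁ = convexHull ℝ s)
    (hP₂ : ∃ s : Set ((Fin n₂ → ℝ) × (Fin d₂ → ℝ)), s.Finite ∧ P₂ = convexHull ℝ s)
    (hP₃ : P₃ = convexHull ℝ
      {q | q.2.1 ∈ Set.extremePoints ℝ (Prod.fst '' P₁) ∧
           q.2.2 ∈ Set.extremePoints ℝ (Prod.fst '' P₂) ∧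
           f (q.2.1, q.2.2) = some q.1})
    (hQ : Q = {q | q.2.1 ∈ P₁ ∧ q.2.2 ∈ P₂ ∧ (q.1, q.2.1.1, q.2.2.1) ∈ P₃})
    (hPF₁ : ∀ F : Set ((Fin n₁ → ℝ) × (Fin d₁ → ℝ)),
        IsExposed ℝ P₁ F → IsExposed ℝ (Prod.fst '' P₁) (Prod.fst '' F))
    (hPF₂ : ∀ F : Set ((Fin n₂ → ℝ) × (Fin d₂ → ℝ)),
        IsExposed ℝ P₂ F → IsExposed ℝ (Prod.fst '' P₂) (Prod.fst '' F))
    (hvert₃ : ∀ v ∈ Set.extremePoints ℝ P₃,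
        v.1 ∈ Set.extremePoints ℝ (Prod.fst '' P₃)) :
    ∀ F : Set ((Fin n → ℝ) × ((Fin n₁ → ℝ) × (Fin d₁ → ℝ)) × ((Fin n₂ → ℝ) × (Fin d₂ → ℝ))),
      IsExposed ℝ Q F →
        IsExposed ℝ ((fun q => (q.1, q.2.1.1, q.2.2.1)) '' Q)
          ((fun q => (q.1, q.2.1.1, q.2.2.1)) '' F) := by
  subst hQ hP₃
  have hA := IsPolytope.image hP₁ (LinearMap.fst ℝ _ _)
  have hB := IsPolytope.image hP₂ (LinearMap.fst ℝ _ _)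
  exact margot_composition_pf_general hP₁ hP₂ (isPolytope_convexHull_vertexGraph hA hB f)
    (mapsTo_snd_convexHull_vertexGraph hA.convex hB.convex f) hPF₁ hPF₂
end

section
/- For a polytope P ⊆ ℝⁿ × ℝᵈ and the projection p_x : ℝⁿ × ℝᵈ → ℝⁿ onto the first n coordinates, the pair (P, p_x) has the PF-property if and only if P is an affinely generated polyhedral relation of type (n, d), i.e. there exist finitely many affine maps ρ₁, …, ρ_t : ℝⁿ → ℝᵈ such that for every x ∈ p_x(P) one has P ∩ p_x⁻¹(x) = conv{(x, ρ_j(x)) : 1 ≤ j ≤ t}. -/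
open Set

/-!
Let `P` be a polytope with the PF-property and let `b` be a functional on the fibres. Over the
barycenter of the projected vertices, `b` is maximised by some face of `P` that is exposed by a
functional `l` extending `b`. The image of this face is a face of the projection containing the
barycenter, so it is the whole projection. For generic `b` the face contains no vertical direction,
because `l` restricts to `b` on those; it is then the graph of an affine map, and it maximises `b`
in every fibre. Only finitely many such graphs arise, one for each admissible set of vertices, and
by separation and density of the generic `b` their values span every fibre.

Conversely, let `ρ₁, …, ρ_t` generate `P` and let `l` expose a face of `P` at the value `M`. Over
each point of the image of this face, one of the affine functions `x ↦ l (x, ρⱼ x) ≤ M` takes the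
value `M`. By averaging, a single one of them is identically `M` on the image, so it exposes the
image.
-/

section Convexity

variable {E F : Type*} [AddCommGroup E] [Module ℝ E] [AddCommGroup F] [Module ℝ F]

lemma sum_centroid_sub {ι : Type*} {s : Finset ι} (hs : s.Nonempty) (p : ι → E) :
    ∑ i ∈ s, (s.centroid ℝ p - p i) = 0 := by
  have hcard : (s.card : ℝ) ≠ 0 := Nat.cast_ne_zero.2 hs.card_ne_zero
  rw [Finset.sum_sub_distrib, Finset.sum_const, Finset.centroid_def,
    Finset.affineCombination_eq_linear_combination _ _ _
      (s.sum_centroidWeights_eq_one_of_nonempty ℝ hs)]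
  simp only [Finset.centroidWeights_apply, ← Finset.smul_sum]
  rw [← Nat.cast_smul_eq_nsmul ℝ, smul_inv_smul₀ hcard, sub_self]

lemma centroid_mem_of_convex {ι : Type*} {s : Finset ι} (hs : s.Nonempty) {p : ι → E}
    {C : Set E} (hC : Convex ℝ C) (hp : ∀ i ∈ s, p i ∈ C) : s.centroid ℝ p ∈ C := by
  rw [Finset.centroid_eq_centerMass s hs]
  exact hC.centerMass_mem (fun _ _ => by simp) (by simp [hs.card_ne_zero]) hp

lemma eq_of_centroid_eq_of_le {ι : Type*} {s : Finset ι} (hs : s.Nonempty) {p : ι → E}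
    {g : E →ᵃ[ℝ] ℝ} {M : ℝ} (hle : ∀ i ∈ s, g (p i) ≤ M) (heq : g (s.centroid ℝ p) = M) :
    ∀ i ∈ s, g (p i) = M := by
  have hsum : ∑ i ∈ s, (M - g (p i)) = 0 := by
    simpa only [map_sum, map_zero, ← vsub_eq_sub, AffineMap.linearMap_vsub, heq]
      using congrArg g.linear (sum_centroid_sub hs p)
  intro i hi
  exact (sub_eq_zero.1 <|
    (Finset.sum_eq_zero_iff_of_nonneg fun j hj => sub_nonneg.2 (hle j hj)).1 hsum i hi).symm

lemma exists_forall_eq_of_forall_exists_eq {ι : Type*} [Finite ι] {C : Set E}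
    (hC : Convex ℝ C) (hne : C.Nonempty) {g : ι → E →ᵃ[ℝ] ℝ} {M : ℝ}
    (hle : ∀ i, ∀ x ∈ C, g i x ≤ M) (hex : ∀ x ∈ C, ∃ i, g i x = M) :
    ∃ i, ∀ x ∈ C, g i x = M := by
  have := Fintype.ofFinite ι
  -- If every `g i` missed the value `M` at some point of `C`, none would attain it at the centroid
  -- of these points.
  by_contra! hno
  choose c hcC hc using hno
  have hι : (Finset.univ : Finset ι).Nonempty :=
    let ⟨i, _⟩ := hex _ hne.some_mem
    ⟨i, Finset.mem_univ i⟩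
  obtain ⟨k, hk⟩ := hex _ (centroid_mem_of_convex hι hC fun i _ => hcC i)
  exact hc k (eq_of_centroid_eq_of_le hι (fun i _ => hle k _ (hcC i)) hk k (Finset.mem_univ k))

lemma convexHull_sep_apply_eq {s : Set E} {f : E →ₗ[ℝ] ℝ} {M : ℝ} (hM : ∀ v ∈ s, f v ≤ M) :
    convexHull ℝ {v ∈ s | f v = M} = {q ∈ convexHull ℝ s | f q = M} := by
  let C : Set E := {q | f q ≤ M ∧ (f q = M → q ∈ convexHull ℝ {v ∈ s | f v = M})}
  have hC : Convex ℝ C := by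
    rw [convex_iff_forall_pos]
    rintro p ⟨hpM, hp⟩ q ⟨hqM, hq⟩ α β hα hβ hαβ
    have hf : f (α • p + β • q) = M - α * (M - f p) - β * (M - f q) := by
      simp only [map_add, map_smul, smul_eq_mul]
      linear_combination M * hαβ
    have hα' := mul_nonneg hα.le (sub_nonneg.2 hpM)
    have hβ' := mul_nonneg hβ.le (sub_nonneg.2 hqM)
    refine ⟨by linarith, fun h => ?_⟩
    have hpM' : α * (M - f p) = 0 := by linarith
    have hqM' : β * (M - f q) = 0 := by linarith
    exact convex_convexHull ℝ _
      (hp (sub_eq_zero.1 ((mul_eq_zero.1 hpM').resolve_left hα.ne')).symm)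
      (hq (sub_eq_zero.1 ((mul_eq_zero.1 hqM').resolve_left hβ.ne')).symm) hα.le hβ.le hαβ
  have hsC : s ⊆ C := fun v hv => ⟨hM v hv, fun h => subset_convexHull ℝ _ ⟨hv, h⟩⟩
  refine Subset.antisymm (fun q hq => ⟨convexHull_mono (sep_subset _ _) hq, ?_⟩)
    fun q ⟨hq, hqM⟩ => (convexHull_min hsC hC hq).2 hqM
  exact convexHull_min (fun _ hv => hv.2) (convex_hyperplane f.isLinear M) hq

lemma exists_dual_apply_le {ι : Type*} [Fintype ι] {x : ι → E} {w : ι → ℝ}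
    (hw : ∀ i, 0 < w i) (hwx : ∑ i, w i • x i = 0) {c : ι → ℝ}
    (hc : ∀ μ : ι → ℝ, 0 ≤ μ → ∑ i, μ i • x i = 0 → 0 ≤ ∑ i, μ i * c i) :
    ∃ a : E →ₗ[ℝ] ℝ, ∀ i, a (x i) ≤ c i := by
  classical
  let T : (ι → ℝ) →ₗ[ℝ] E := Fintype.linearCombination ℝ x
  let φ : (ι → ℝ) →ₗ[ℝ] ℝ := Fintype.linearCombination ℝ c
  -- Every `μ` becomes nonnegative after adding a multiple of the positive relation `w`, so Riesz's
  -- extension theorem applies and no closedness of cones is needed.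
  obtain ⟨g, hgφ, hg⟩ := riesz_extension (PointedCone.positive ℝ (ι → ℝ))
    ⟨LinearMap.ker T, φ.domRestrict _⟩
    (fun μ hμ => hc μ.1 hμ μ.2) fun μ => by
      obtain ⟨N, hN⟩ := (finite_range fun i => -μ i / w i).bddAbove
      refine ⟨N • ⟨w, hwx⟩, fun i => ?_⟩
      have := (div_le_iff₀ (hw i)).1 (hN (mem_range_self i))
      simpa [neg_le_iff_add_nonneg] using this
  have hker : LinearMap.ker T ≤ LinearMap.ker (φ - g) := fun μ hμ => by
    simpa [sub_eq_zero] using (hgφ ⟨μ, hμ⟩).symm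
  obtain ⟨a, ha⟩ : φ - g ∈ LinearMap.range T.dualMap := by
    rw [LinearMap.range_dualMap_eq_dualAnnihilator_ker]
    exact (Submodule.mem_dualAnnihilator _).2 hker
  refine ⟨a, fun i => ?_⟩
  have h := LinearMap.congr_fun ha (Pi.single i 1)
  have hpos := hg (Pi.single i 1) (Pi.single_nonneg.2 zero_le_one)
  simp only [T, φ, LinearMap.dualMap_apply, Fintype.linearCombination_apply_single, one_smul,
    LinearMap.sub_apply, smul_eq_mul, one_mul] at h
  linarith

lemma sum_smul_sub_map_centerMass {ι : Type*} {s : Finset ι} {w : ι → ℝ} (hw : ∑ i ∈ s, w i ≠ 0)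
    (p : ι → E) (f : E →ₗ[ℝ] F) (z : F) :
    ∑ i ∈ s, w i • (z - f (p i)) = (∑ i ∈ s, w i) • (z - f (s.centerMass w p)) := by
  rw [Finset.centerMass, map_smul, smul_sub, smul_inv_smul₀ hw, map_sum, Finset.sum_smul,
    ← Finset.sum_sub_distrib]
  simp only [map_smul, smul_sub]

lemma exists_supergradient_at_centroid {s : Finset (E × F)} (hs : s.Nonempty)
    {b : F →ₗ[ℝ] ℝ} {m : ℝ}
    (hm : ∀ y, (s.centroid ℝ Prod.fst, y) ∈ convexHull ℝ (s : Set (E × F)) → b y ≤ m) :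
    ∃ a : E →ₗ[ℝ] ℝ, ∀ q ∈ s, b q.2 ≤ m + a (q.1 - s.centroid ℝ Prod.fst) := by
  set x₀ := s.centroid ℝ Prod.fst
  have hsum : ∑ q : s, (1 : ℝ) • (x₀ - q.1.1) = 0 := by
    simp only [one_smul]
    exact (Finset.sum_coe_sort s fun q => x₀ - q.1).trans (sum_centroid_sub hs Prod.fst)
  have hdual : ∀ μ : s → ℝ, 0 ≤ μ → ∑ q, μ q • (x₀ - q.1.1) = 0 →
      0 ≤ ∑ q, μ q * (m - b q.1.2) := by
    intro μ hμ hμx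
    obtain hΛ | hΛ := (Finset.sum_nonneg fun q _ => hμ q : 0 ≤ ∑ q, μ q).eq_or_lt
    · have hzero := (Finset.sum_eq_zero_iff_of_nonneg fun q _ => hμ q).1 hΛ.symm
      exact (Finset.sum_eq_zero fun q hq => by rw [hzero q hq, zero_mul]).ge
    -- Normalising a nonnegative relation `μ` gives a point of the hull above `x₀`.
    let p : E × F := Finset.univ.centerMass μ fun q : s => q.1
    have hp : p ∈ convexHull ℝ (s : Set (E × F)) :=
      Finset.centerMass_mem_convexHull _ (fun q _ => hμ q) hΛ fun q _ => q.2
    have hpx : (∑ q, μ q) • (x₀ - p.1) = 0 :=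
      (sum_smul_sub_map_centerMass hΛ.ne' _ (LinearMap.fst ℝ E F) x₀).symm.trans hμx
    have hx₀ : x₀ = p.1 := sub_eq_zero.1 ((smul_eq_zero.1 hpx).resolve_left hΛ.ne')
    have hpb : ∑ q, μ q * (m - b q.1.2) = (∑ q, μ q) * (m - b p.2) :=
      sum_smul_sub_map_centerMass hΛ.ne' _ (b ∘ₗ LinearMap.snd ℝ E F) m
    rw [hpb]
    exact mul_nonneg hΛ.le (sub_nonneg.2 (hm p.2 (hx₀ ▸ hp)))
  obtain ⟨a, ha⟩ := exists_dual_apply_le (fun _ => one_pos) hsum hdual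
  refine ⟨a, fun q hq => ?_⟩
  have hle := ha ⟨q, hq⟩
  rw [← neg_sub q.1, map_neg] at hle
  linarith

end Convexity

section ExposedFaces

variable {E : Type*} [AddCommGroup E] [Module ℝ E] [TopologicalSpace E]

lemma isExposed_iff_exists_supporting {A B : Set E} (hB : B.Nonempty) :
    IsExposed ℝ A B ↔
      ∃ (l : E →L[ℝ] ℝ) (M : ℝ), (∀ x ∈ A, l x ≤ M) ∧ B = {x ∈ A | l x = M} := by
  constructor
  · intro h
    obtain ⟨l, rfl⟩ := h hB
    obtain ⟨b, hbA, hb⟩ := hB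
    exact ⟨l, l b, hb, ext fun x => and_congr_right fun hx =>
      ⟨fun h => (hb x hx).antisymm (h b hbA), fun h y hy => h ▸ hb y hy⟩⟩
  · rintro ⟨l, M, hM, rfl⟩ -
    obtain ⟨b, hbA, hb⟩ := hB
    exact ⟨l, ext fun x => and_congr_right fun hx =>
      ⟨fun h y hy => h ▸ hM y hy, fun h => (hM x hx).antisymm (hb ▸ h b hbA)⟩⟩

lemma isExposed_setOf_affine_eq [IsTopologicalAddGroup E] {A : Set E} {g : E →ᴬ[ℝ] ℝ} {M : ℝ}
    (hM : ∀ x ∈ A, g x ≤ M) : IsExposed ℝ A {x ∈ A | g x = M} := by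
  have hg : ∀ x, g x = g.contLinear x + g 0 := congrFun g.decomp
  intro hne
  refine (isExposed_iff_exists_supporting hne).2 ⟨g.contLinear, M - g 0, fun x hx => ?_, ?_⟩ hne
  · linarith [hM x hx, hg x]
  · exact ext fun x => and_congr_right fun _ => by rw [hg, eq_sub_iff_add_eq]

lemma eq_convexHull_of_isExposed_of_centroid_mem {ι : Type*} {s : Finset ι} (hs : s.Nonempty)
    {p : ι → E} {B : Set E} (hB : IsExposed ℝ (convexHull ℝ (p '' s)) B)
    (hmem : s.centroid ℝ p ∈ B) : B = convexHull ℝ (p '' s) := by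
  obtain ⟨l, M, hM, rfl⟩ := (isExposed_iff_exists_supporting ⟨_, hmem⟩).1 hB
  have hl : ∀ i ∈ s, l (p i) = M :=
    eq_of_centroid_eq_of_le (g := (l : E →ₗ[ℝ] ℝ).toAffineMap) hs
      (fun i hi => hM _ (subset_convexHull ℝ _ (mem_image_of_mem p hi))) hmem.2
  refine (sep_subset _ _).antisymm fun x hx => ⟨hx, ?_⟩
  exact convexHull_min (forall_mem_image.2 hl) (convex_hyperplane l.toLinearMap.isLinear M) hx

end ExposedFaces

section Functionals

variable {F : Type*} [AddCommGroup F] [Module ℝ F] [TopologicalSpace F]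
  [IsTopologicalAddGroup F] [ContinuousSMul ℝ F] [T2Space F] [LocallyConvexSpace ℝ F]

lemma dense_setOf_apply_ne_zero {y : F} (hy : y ≠ 0) : Dense {b : F →L[ℝ] ℝ | b y ≠ 0} := by
  obtain ⟨b₀, hb₀⟩ := SeparatingDual.exists_ne_zero (R := ℝ) hy
  let ev : (F →L[ℝ] ℝ) →L[ℝ] ℝ :=
    ⟨⟨⟨fun b => b y, fun _ _ => rfl⟩, fun _ _ => rfl⟩, continuous_eval_const y⟩
  have hev : ev ≠ 0 := fun h => hb₀ (DFunLike.congr_fun h b₀)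
  exact (dense_compl_singleton (0 : ℝ)).preimage (ev.isOpenMap_of_ne_zero hev)

lemma dense_setOf_forall_eq_bot_of_le_ker {ι : Type*} [Finite ι] (V : ι → Submodule ℝ F) :
    Dense {b : F →L[ℝ] ℝ | ∀ i, V i ≤ LinearMap.ker b.toLinearMap → V i = ⊥} := by
  have hV : ∀ i : {i // V i ≠ ⊥}, ∃ w ∈ V i, w ≠ 0 := fun i =>
    Submodule.exists_mem_ne_zero_of_ne_bot i.2
  choose w hwV hw using hV
  have hdense : Dense (⋂₀ range fun i => {b : F →L[ℝ] ℝ | b (w i) ≠ 0}) :=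
    (finite_range _).dense_sInter
      (forall_mem_range.2 fun i => isOpen_ne_fun (continuous_eval_const _) continuous_const)
      (forall_mem_range.2 fun i => dense_setOf_apply_ne_zero (hw i))
  refine hdense.mono fun b hb i hker => ?_
  by_contra hi
  exact hb _ (mem_range_self ⟨i, hi⟩) (hker (hwV ⟨i, hi⟩))

lemma mem_convexHull_of_dense_le {t : Set F} (ht : t.Finite) {D : Set (F →L[ℝ] ℝ)}
    (hD : Dense D) {y : F} (hy : ∀ b ∈ D, ∃ z ∈ t, b y ≤ b z) : y ∈ convexHull ℝ t := by
  by_contra hnot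
  obtain ⟨b₀, u, hlt, hu⟩ := geometric_hahn_banach_closed_point (convex_convexHull ℝ t)
    (ht.isClosed_convexHull ℝ) hnot
  have hopen : IsOpen {b : F →L[ℝ] ℝ | ∀ z ∈ t, b z < b y} := by
    simp only [ofPred_forall]
    exact ht.isOpen_biInter fun z _ => isOpen_lt (by fun_prop) (by fun_prop)
  obtain ⟨b, hb, hbD⟩ := hD.inter_open_nonempty _ hopen
    ⟨b₀, fun z hz => (hlt z (subset_convexHull ℝ t hz)).trans hu⟩
  obtain ⟨z, hz, hyz⟩ := hy b hbD
  exact (hb z hz).not_ge hyz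

end Functionals

lemma exists_continuousLinearMap_eqOn {E F : Type*}
    [AddCommGroup E] [Module ℝ E] [TopologicalSpace E] [IsTopologicalAddGroup E]
    [ContinuousSMul ℝ E] [T2Space E] [LocallyConvexSpace ℝ E]
    [AddCommGroup F] [Module ℝ F] [TopologicalSpace F] [IsTopologicalAddGroup F]
    [ContinuousSMul ℝ F] [T2Space F] (S : Submodule ℝ E) [FiniteDimensional ℝ S]
    (φ : E →ₗ[ℝ] F) : ∃ g : E →L[ℝ] F, EqOn g φ S := by
  obtain ⟨g, hg⟩ := (φ.domRestrict S).toContinuousLinearMap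
    |>.exist_extension_of_finiteDimensional_range
  exact ⟨g, fun x hx => (DFunLike.congr_fun hg ⟨x, hx⟩).symm⟩

section PolyhedralRelations

variable {ι E F : Type*} [AddCommGroup E] [Module ℝ E] [AddCommGroup F] [Module ℝ F]

/-- The family `ρ` generates `P` as a relation: over each point of its projection, the fibre of
`P` is the convex hull of the values of `ρ`, as a polyhedral relation requires. No affinity of
`ρ` is built in. -/
def IsGeneratedBy (P : Set (E × F)) (ρ : ι → E → F) : Prop :=
  ∀ x ∈ Prod.fst '' P,
    P ∩ Prod.fst ⁻¹' {x} = convexHull ℝ {q | ∃ j, q = (x, ρ j x)}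

lemma isGeneratedBy_iff {P : Set (E × F)} {ρ : ι → E → F} :
    IsGeneratedBy P ρ ↔
      ∀ x ∈ Prod.fst '' P, ∀ y, (x, y) ∈ P ↔ y ∈ convexHull ℝ (range fun j => ρ j x) := by
  refine forall₂_congr fun x _ => ?_
  have hset : {q : E × F | ∃ j, q = (x, ρ j x)} = {x} ×ˢ range fun j => ρ j x := by
    ext ⟨x', y⟩
    simp only [mem_ofPred_eq, Prod.mk.injEq, mem_prod, mem_singleton_iff, mem_range]
    constructor
    · rintro ⟨j, rfl, rfl⟩
      exact ⟨rfl, j, rfl⟩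
    · rintro ⟨rfl, j, rfl⟩
      exact ⟨j, rfl, rfl⟩
  rw [hset, convexHull_prod, convexHull_singleton, Set.ext_iff]
  constructor
  · intro h y
    simpa using h (x, y)
  · rintro h ⟨x', y⟩
    simp only [mem_inter_iff, mem_preimage, mem_singleton_iff, mem_prod]
    rw [and_comm]
    refine and_congr_right ?_
    rintro rfl
    exact h y

lemma IsGeneratedBy.comp_surjective {κ : Type*} {P : Set (E × F)} {ρ : ι → E → F}
    (hρ : IsGeneratedBy P ρ) {f : κ → ι} (hf : Function.Surjective f) : IsGeneratedBy P (ρ ∘ f) :=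
  fun x hx => by simpa only [Function.comp_apply, hf.exists] using hρ x hx

variable [TopologicalSpace E] [TopologicalSpace F]

/-- The projected faces property of `(P, p_x)`: the projection to the first factor maps exposed
faces of `P` to exposed faces of the projection of `P`. -/
def HasProjectedFaces (P : Set (E × F)) : Prop :=
  ∀ B, IsExposed ℝ P B → IsExposed ℝ (Prod.fst '' P) (Prod.fst '' B)

lemma IsGeneratedBy.hasProjectedFaces [IsTopologicalAddGroup E] [IsTopologicalAddGroup F]
    [Finite ι] {P : Set (E × F)} (hP : Convex ℝ P) {ρ : ι → E →ᴬ[ℝ] F}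
    (hρ : IsGeneratedBy P fun j => ρ j) : HasProjectedFaces P := by
  intro B hB
  obtain rfl | hne := B.eq_empty_or_nonempty
  · simpa only [image_empty] using isExposed_empty
  obtain ⟨l, M, hM, rfl⟩ := (isExposed_iff_exists_supporting hne).1 hB
  let g (j : ι) : E →ᴬ[ℝ] ℝ :=
    l.toContinuousAffineMap.comp ((ContinuousAffineMap.id ℝ E).prod (ρ j))
  have hρP : ∀ x ∈ Prod.fst '' P, ∀ j, (x, ρ j x) ∈ P := fun x hx j =>
    (isGeneratedBy_iff.1 hρ x hx _).2 (subset_convexHull ℝ _ (mem_range_self j))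
  have hgM : ∀ j, ∀ x ∈ Prod.fst '' P, g j x ≤ M := fun j x hx => hM _ (hρP x hx j)
  have hconv : Convex ℝ (Prod.fst '' {q ∈ P | l q = M}) :=
    (hP.inter (convex_hyperplane l.toLinearMap.isLinear M)).linear_image (LinearMap.fst ℝ E F)
  have hsub : Prod.fst '' {q ∈ P | l q = M} ⊆ Prod.fst '' P := image_mono (sep_subset _ _)
  have hattained : ∀ x ∈ Prod.fst '' {q ∈ P | l q = M}, ∃ j, g j x = M := by
    rintro _ ⟨⟨x, y⟩, ⟨hxy, hl⟩, rfl⟩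
    have hx : x ∈ Prod.fst '' P := mem_image_of_mem _ hxy
    obtain ⟨_, ⟨j, rfl⟩, hj⟩ := (l.toLinearMap.convexOn convex_univ).exists_ge_of_mem_convexHull
      (subset_univ _) ((hρ x hx).subset ⟨hxy, rfl⟩)
    exact ⟨j, (hgM j x hx).antisymm (hl.symm.trans_le hj)⟩
  obtain ⟨k, hk⟩ := exists_forall_eq_of_forall_exists_eq (g := fun j => (g j : E →ᵃ[ℝ] ℝ)) hconv
    (hne.image _) (fun j x hx => hgM j x (hsub hx)) hattained
  have heq : Prod.fst '' {q ∈ P | l q = M} = {x ∈ Prod.fst '' P | g k x = M} :=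
    Subset.antisymm (fun x hx => ⟨hsub hx, hk x hx⟩)
      fun x hx => ⟨(x, ρ k x), ⟨hρP x hx.1 k, hx.2⟩, rfl⟩
  rw [heq]
  exact isExposed_setOf_affine_eq (hgM k)

end PolyhedralRelations

section Supports

variable {E F : Type*}
  [AddCommGroup E] [Module ℝ E] [TopologicalSpace E] [IsTopologicalAddGroup E]
  [ContinuousSMul ℝ E] [T2Space E] [LocallyConvexSpace ℝ E]
  [AddCommGroup F] [Module ℝ F] [TopologicalSpace F] [IsTopologicalAddGroup F]
  [ContinuousSMul ℝ F]

lemma exists_support_over_centroid {s : Finset (E × F)} (hs : s.Nonempty) (b : F →L[ℝ] ℝ) :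
    ∃ l : E × F →L[ℝ] ℝ, (∀ y, l (0, y) = b y) ∧
      ∃ p ∈ convexHull ℝ (s : Set (E × F)), p.1 = s.centroid ℝ Prod.fst ∧
        ∀ q ∈ convexHull ℝ (s : Set (E × F)), l q ≤ l p := by
  set P := convexHull ℝ (s : Set (E × F))
  set x₀ := s.centroid ℝ Prod.fst
  have hx₀ : x₀ ∈ Prod.fst '' P :=
    centroid_mem_of_convex hs ((convex_convexHull ℝ _).linear_image (LinearMap.fst ℝ E F))
      fun q hq => mem_image_of_mem _ (subset_convexHull ℝ _ hq)
  have hcompact : IsCompact (P ∩ Prod.fst ⁻¹' {x₀}) :=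
    (s.finite_toSet.isCompact_convexHull ℝ).inter_right
      (isClosed_singleton.preimage continuous_fst)
  obtain ⟨p, ⟨hp, hpx⟩, hmax⟩ := hcompact.exists_isMaxOn
    (let ⟨q, hq, hqx⟩ := hx₀; ⟨q, hq, hqx⟩) (b.continuous.comp continuous_snd).continuousOn
  obtain ⟨a₀, ha₀⟩ := exists_supergradient_at_centroid hs (b := b.toLinearMap)
    (m := b p.2) fun y hy => hmax ⟨hy, rfl⟩
  let S : Submodule ℝ E := Submodule.span ℝ ((fun q : E × F => q.1 - x₀) '' s)
  have : FiniteDimensional ℝ S := FiniteDimensional.span_of_finite ℝ (s.finite_toSet.image _)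
  obtain ⟨a, ha⟩ := exists_continuousLinearMap_eqOn S a₀
  refine ⟨(-a).coprod b, fun y => by simp, p, hp, hpx, fun q hq => ?_⟩
  refine convexHull_min (fun v hv => ?_) (convex_halfSpace_le ((-a).coprod b).isLinear _) hq
  have hav : a (v.1 - x₀) = a₀ (v.1 - x₀) :=
    ha (Submodule.subset_span (mem_image_of_mem _ hv))
  have hpa : a p.1 = a x₀ := congrArg a hpx
  have hle : b v.2 ≤ b p.2 + a₀ (v.1 - x₀) := ha₀ v hv
  rw [map_sub] at hav
  change -a v.1 + b v.2 ≤ -a p.1 + b p.2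
  linarith

lemma HasProjectedFaces.exists_support_over_image {s : Finset (E × F)}
    (h : HasProjectedFaces (convexHull ℝ (s : Set (E × F)))) (b : F →L[ℝ] ℝ) :
    ∃ (l : E × F →L[ℝ] ℝ) (M : ℝ), (∀ y, l (0, y) = b y) ∧
      (∀ q ∈ convexHull ℝ (s : Set (E × F)), l q ≤ M) ∧
      Prod.fst '' {q ∈ convexHull ℝ (s : Set (E × F)) | l q = M} =
        Prod.fst '' convexHull ℝ (s : Set (E × F)) := by
  obtain rfl | hs := s.eq_empty_or_nonempty
  · exact ⟨b.comp (.snd ℝ E F), 0, by simp⟩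
  obtain ⟨l, hlb, p, hp, hpx, hl⟩ := exists_support_over_centroid hs b
  refine ⟨l, l p, hlb, hl, ?_⟩
  have hpB : p ∈ {q ∈ convexHull ℝ (s : Set (E × F)) | l q = l p} := ⟨hp, rfl⟩
  have hB := h _ ((isExposed_iff_exists_supporting ⟨p, hpB⟩).2 ⟨l, l p, hl, rfl⟩)
  have himage : Prod.fst '' convexHull ℝ (s : Set (E × F)) =
      convexHull ℝ (Prod.fst '' (s : Set (E × F))) :=
    (LinearMap.fst ℝ E F).image_convexHull _
  rw [himage] at hB ⊢
  exact eq_convexHull_of_isExposed_of_centroid_mem hs hB ⟨p, hpB, hpx⟩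

end Supports

section Graphs

variable {E F : Type*} [AddCommGroup E] [Module ℝ E] [AddCommGroup F] [Module ℝ F]

/-- The vectors `w` such that `(0, w)` lies in the direction of the affine span of `T`. This
submodule is trivial exactly when that span is the graph of an affine map over its projection. -/
def verticalDirections (T : Set (E × F)) : Submodule ℝ F :=
  (vectorSpan ℝ T).comap (LinearMap.inr ℝ E F)

lemma verticalDirections_le_ker {T : Set (E × F)} {l : E × F →ₗ[ℝ] ℝ} {M : ℝ}
    (hT : ∀ q ∈ T, l q = M) :
    verticalDirections T ≤ LinearMap.ker (l ∘ₗ LinearMap.inr ℝ E F) := by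
  have hspan : vectorSpan ℝ T ≤ LinearMap.ker l := by
    rw [vectorSpan_def, Submodule.span_le]
    rintro _ ⟨p, hp, q, hq, rfl⟩
    simp [hT p hp, hT q hq]
  exact Submodule.comap_mono hspan

/-- The subsets of `s` whose convex hull is the graph of an affine map over the whole projection
of `convexHull ℝ s`. These graphs provide the generators in the PF-property. -/
def spanningGraphs (s : Set (E × F)) : Set (Set (E × F)) :=
  {T | T ⊆ s ∧ verticalDirections T = ⊥ ∧
    Prod.fst '' convexHull ℝ T = Prod.fst '' convexHull ℝ s}

lemma finite_spanningGraphs {s : Set (E × F)} (hs : s.Finite) : (spanningGraphs s).Finite :=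
  hs.finite_subsets.subset fun _ hT => hT.1

variable [TopologicalSpace E] [IsTopologicalAddGroup E] [ContinuousSMul ℝ E] [T2Space E]
  [LocallyConvexSpace ℝ E] [TopologicalSpace F] [IsTopologicalAddGroup F] [ContinuousSMul ℝ F]
  [T2Space F]

lemma exists_continuousAffineMap_eqOn_affineSpan {T : Set (E × F)}
    [FiniteDimensional ℝ (vectorSpan ℝ T)] (hT : verticalDirections T = ⊥) :
    ∃ ρ : E →ᴬ[ℝ] F, ∀ q ∈ affineSpan ℝ T, ρ q.1 = q.2 := by
  obtain hempty | ⟨p, hp⟩ := (affineSpan ℝ T : Set (E × F)).eq_empty_or_nonempty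
  · exact ⟨0, fun q hq => (hempty.subset hq).elim⟩
  let f : vectorSpan ℝ T →ₗ[ℝ] E := (LinearMap.fst ℝ E F).domRestrict _
  have hf : LinearMap.ker f = ⊥ := by
    refine LinearMap.ker_eq_bot'.2 ?_
    rintro ⟨⟨x, y⟩, hxy⟩ (rfl : x = 0)
    have hy : y ∈ verticalDirections T := hxy
    rw [hT, Submodule.mem_bot] at hy
    simp [hy]
  obtain ⟨g, hg⟩ := f.exists_leftInverse_of_injective hf
  obtain ⟨φ, hφ⟩ := exists_continuousLinearMap_eqOn (LinearMap.range f)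
    (LinearMap.snd ℝ E F ∘ₗ (vectorSpan ℝ T).subtype ∘ₗ g)
  refine ⟨φ.toContinuousAffineMap + .const ℝ E (p.2 - φ p.1), fun q hq => ?_⟩
  have hqp : q - p ∈ vectorSpan ℝ T := by
    rw [← direction_affineSpan]
    exact AffineSubspace.vsub_mem_direction hq hp
  have hφqp : φ (q.1 - p.1) = q.2 - p.2 :=
    (hφ ⟨⟨q - p, hqp⟩, rfl⟩).trans
      (congrArg (fun v : vectorSpan ℝ T => v.1.2) (LinearMap.congr_fun hg ⟨q - p, hqp⟩))
  rw [map_sub, sub_eq_sub_iff_add_eq_add] at hφqp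
  change φ q.1 + (p.2 - φ p.1) = q.2
  rw [add_sub_assoc', hφqp, add_sub_cancel_right]

end Graphs

section Generators

variable {E F : Type*}
  [AddCommGroup E] [Module ℝ E] [TopologicalSpace E] [IsTopologicalAddGroup E]
  [ContinuousSMul ℝ E] [T2Space E] [LocallyConvexSpace ℝ E]
  [AddCommGroup F] [Module ℝ F] [TopologicalSpace F] [IsTopologicalAddGroup F]
  [ContinuousSMul ℝ F]

lemma HasProjectedFaces.exists_upper_spanningGraph {s : Finset (E × F)}
    (h : HasProjectedFaces (convexHull ℝ (s : Set (E × F)))) {b : F →L[ℝ] ℝ}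
    (hb : ∀ T ⊆ (s : Set (E × F)), verticalDirections T ≤ LinearMap.ker b.toLinearMap →
      verticalDirections T = ⊥) :
    ∃ T ∈ spanningGraphs (s : Set (E × F)), ∀ q ∈ convexHull ℝ (s : Set (E × F)),
      ∀ r ∈ convexHull ℝ T, q.1 = r.1 → b q.2 ≤ b r.2 := by
  obtain ⟨l, M, hlb, hl, himage⟩ := h.exists_support_over_image b
  have hconv := convexHull_sep_apply_eq (f := l.toLinearMap)
    fun v hv => hl v (subset_convexHull ℝ (s : Set (E × F)) hv)
  refine ⟨{v ∈ (s : Set (E × F)) | l v = M}, ⟨sep_subset _ _, hb _ (sep_subset _ _) ?_, ?_⟩, ?_⟩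
  · refine (verticalDirections_le_ker (l := l.toLinearMap) fun q hq => hq.2).trans fun w hw => ?_
    exact (hlb w).symm.trans hw
  · exact (congrArg (Prod.fst '' ·) hconv).trans himage
  · intro q hq r hr hqr
    have hrM : l r = M := (hconv.subset hr).2
    have hvert : l (q - r) = b (q.2 - r.2) := by
      rw [← hlb, ← sub_eq_zero.2 hqr]
      rfl
    rw [map_sub, map_sub] at hvert
    linarith [hl q hq]

variable [T2Space F] [LocallyConvexSpace ℝ F]

lemma HasProjectedFaces.isGeneratedBy {s : Finset (E × F)}
    (h : HasProjectedFaces (convexHull ℝ (s : Set (E × F)))) {ρ : Set (E × F) → E → F}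
    (hρ : ∀ T ∈ spanningGraphs (s : Set (E × F)), ∀ q ∈ convexHull ℝ T, ρ T q.1 = q.2) :
    IsGeneratedBy (convexHull ℝ (s : Set (E × F)))
      fun T : spanningGraphs (s : Set (E × F)) => ρ T := by
  have : Finite (spanningGraphs (s : Set (E × F))) := finite_spanningGraphs s.finite_toSet
  have : Finite (𝒫 (s : Set (E × F))) := s.finite_toSet.finite_subsets
  refine isGeneratedBy_iff.2 fun x hx y => ⟨fun hxy => ?_, fun hy => ?_⟩
  · refine mem_convexHull_of_dense_le (finite_range _) (dense_setOf_forall_eq_bot_of_le_ker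
      fun T : 𝒫 (s : Set (E × F)) => verticalDirections T.1) fun b hb => ?_
    obtain ⟨T, hT, hle⟩ := h.exists_upper_spanningGraph fun T hTs => hb ⟨T, hTs⟩
    obtain ⟨r, hr, rfl⟩ := hT.2.2.superset hx
    exact ⟨_, mem_range_self ⟨T, hT⟩, (hle _ hxy r hr rfl).trans_eq (by rw [hρ T hT r hr])⟩
  · have hconv : Convex ℝ {z | (x, z) ∈ convexHull ℝ (s : Set (E × F))} :=
      (convex_convexHull ℝ _).affine_preimage ((AffineMap.const ℝ F x).prod (AffineMap.id ℝ F))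
    refine convexHull_min ?_ hconv hy
    rintro _ ⟨⟨T, hT⟩, rfl⟩
    obtain ⟨r, hr, rfl⟩ := hT.2.2.superset hx
    simp only [mem_ofPred_eq, hρ T hT r hr]
    exact convexHull_mono hT.1 hr

theorem pf_property_iff_affinely_generated_general (P : Set (E × F))
    (hP : ∃ s : Set (E × F), s.Finite ∧ P = convexHull ℝ s) :
    HasProjectedFaces P ↔
      ∃ (t : ℕ) (ρ : Fin t → E →ᴬ[ℝ] F), IsGeneratedBy P fun j => ρ j := by
  obtain ⟨s, hs, rfl⟩ := hP
  lift s to Finset (E × F) using hs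
  refine ⟨fun h => ?_, fun ⟨_, _, hρ⟩ => hρ.hasProjectedFaces (convex_convexHull ℝ _)⟩
  have hgraph : ∀ T ∈ spanningGraphs (s : Set (E × F)),
      ∃ ρ : E →ᴬ[ℝ] F, ∀ q ∈ convexHull ℝ T, ρ q.1 = q.2 := by
    rintro T ⟨hTs, hT, -⟩
    have := finiteDimensional_vectorSpan_of_finite ℝ (s.finite_toSet.subset hTs)
    obtain ⟨ρ, hρ⟩ := exists_continuousAffineMap_eqOn_affineSpan hT
    exact ⟨ρ, fun q hq => hρ q (convexHull_subset_affineSpan T hq)⟩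
  choose! ρ hρ using hgraph
  have : Finite (spanningGraphs (s : Set (E × F))) := finite_spanningGraphs s.finite_toSet
  obtain ⟨t, ⟨e⟩⟩ := Finite.exists_equiv_fin (spanningGraphs (s : Set (E × F)))
  exact ⟨t, fun j => ρ (e.symm j),
    (h.isGeneratedBy (ρ := fun T => ρ T) hρ).comp_surjective e.symm.surjective⟩

end Generators

/-- For a polytope `P ⊆ ℝⁿ × ℝᵈ` and the projection `p_x` onto the first `n` coordinates,
`(P, p_x)` has the PF-property if and only if `P` is an affinely generated polyhedral relation
of type `(n, d)`: there exist finitely many affine maps `ρ₁, …, ρ_t : ℝⁿ → ℝᵈ` such that for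
every `x ∈ p_x(P)` one has `P ∩ p_x⁻¹(x) = conv{(x, ρ_j(x)) : 1 ≤ j ≤ t}`. -/
theorem pf_property_iff_affinely_generated {n d : ℕ}
    (P : Set ((Fin n → ℝ) × (Fin d → ℝ)))
    (hP : ∃ s : Set ((Fin n → ℝ) × (Fin d → ℝ)), s.Finite ∧ P = convexHull ℝ s) :
    (∀ F : Set ((Fin n → ℝ) × (Fin d → ℝ)),
        IsExposed ℝ P F → IsExposed ℝ (Prod.fst '' P) (Prod.fst '' F)) ↔
      ∃ (t : ℕ) (ρ : Fin t → ((Fin n → ℝ) →ᵃ[ℝ] (Fin d → ℝ))),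
        ∀ x ∈ Prod.fst '' P,
          P ∩ Prod.fst ⁻¹' {x} = convexHull ℝ {q | ∃ j : Fin t, q = (x, ρ j x)} :=
  (pf_property_iff_affinely_generated_general P hP).trans
    ⟨fun ⟨t, ρ, hρ⟩ => ⟨t, fun j => ρ j, hρ⟩,
      fun ⟨t, ρ, hρ⟩ => ⟨t, fun j => ⟨ρ j, (ρ j).continuous_of_finiteDimensional⟩, hρ⟩⟩
end

section
/- Let P ⊆ ℝⁿ × ℝᵈ be a polytope such that the pair (P, p_x) has the PF-property. Then there exists a face F of P such that the restriction of p_x to F is an affine isomorphism of F onto p_x(P); in particular p_x is injective on F and p_x(F) = p_x(P). -/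
open Set

/-!
The centroid `c` of the vertices of a polytope `P` lies in no face of `P` other than `P` itself. By
compactness, the fibre of the projection `p` through `c` has an extreme point `u`. Let `F` be the
smallest face of `P` containing `u`; it is exposed because Hahn-Banach separates its affine span
from the convex hull of the vertices outside `F`. A copy of any segment in `F`, translated and
shrunk, lies in `P` with midpoint `u`. A segment on which `p` is constant would thus contradict the
extremality of `u`, so `p` is injective on `F`. By the PF-property `p(F)` is a face of `p(P)`; it
contains `p(u) = p(c)`, so its preimage in `P` is a face containing `c`, hence all of `P`.
-/

section MinimalFace

variable {𝕜 E E' : Type*} [Field 𝕜] [LinearOrder 𝕜] [IsStrictOrderedRing 𝕜]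
  [AddCommGroup E] [Module 𝕜 E] [AddCommGroup E'] [Module 𝕜 E'] {P : Set E} {u v x : E}

variable (𝕜) in
/-- The cone of feasible directions of `P` at `u`. It is generated by the differences `v - u` with
`v ∈ P`; for `P` convex and `u ∈ P` it consists of the directions in which one can move from `u`
some positive distance inside `P`, see `mem_feasibleCone`. -/
def feasibleCone (P : Set E) (u : E) : PointedCone 𝕜 E :=
  PointedCone.hull 𝕜 ((· - u) '' P)

variable (𝕜) in
/-- The smallest face of the convex set `P` containing the point `u ∈ P`, encoded as the points
`v ∈ P` for which the segment from `v` to `u` can be prolonged beyond `u` inside `P`. -/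
def minimalFace (P : Set E) (u : E) : Set E :=
  {v ∈ P | u - v ∈ feasibleCone 𝕜 P u}

lemma sub_mem_feasibleCone (hv : v ∈ P) : v - u ∈ feasibleCone 𝕜 P u :=
  PointedCone.subset_hull (mem_image_of_mem _ hv)

lemma mem_feasibleCone (hP : Convex 𝕜 P) (hu : u ∈ P) :
    x ∈ feasibleCone 𝕜 P u ↔ ∃ ε : 𝕜, 0 < ε ∧ u + ε • x ∈ P := by
  refine ⟨fun hx ↦ ?_, ?_⟩
  · induction hx using Submodule.span_induction with
    | mem x hx =>
      obtain ⟨v, hv, rfl⟩ := hx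
      exact ⟨1, one_pos, by simpa using hv⟩
    | zero => exact ⟨1, one_pos, by simpa using hu⟩
    | add x y _ _ hx hy =>
      obtain ⟨δ, hδ, hx⟩ := hx
      obtain ⟨ε, hε, hy⟩ := hy
      refine ⟨δ * ε / (δ + ε), by positivity, ?_⟩
      convert hP hx hy (a := ε / (δ + ε)) (b := δ / (δ + ε)) (by positivity) (by positivity)
        (by field_simp; ring) using 1
      match_scalars <;> field_simp
      ring
    | smul a x _ hx =>
      obtain ⟨ε, hε, hx⟩ := hx
      obtain ha | ha := a.2.eq_or_lt'
      · exact ⟨1, one_pos, by simpa [Nonneg.mk_smul, show a = 0 from Subtype.ext ha] using hu⟩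
      · refine ⟨ε / a, div_pos hε ha, ?_⟩
        rwa [← Nonneg.coe_smul, smul_smul, div_mul_cancel₀ _ ha.ne']
  · rintro ⟨ε, hε, hx⟩
    have := (feasibleCone 𝕜 P u).smul_mem (inv_nonneg.2 hε.le) (sub_mem_feasibleCone hx)
    rwa [add_sub_cancel_left, inv_smul_smul₀ hε.ne'] at this

lemma self_mem_minimalFace (hu : u ∈ P) : u ∈ minimalFace 𝕜 P u :=
  ⟨hu, by simp⟩

lemma convex_minimalFace (hP : Convex 𝕜 P) : Convex 𝕜 (minimalFace 𝕜 P u) := by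
  rintro v ⟨hv, hvu⟩ w ⟨hw, hwu⟩ a b ha hb hab
  refine ⟨hP hv hw ha hb hab, ?_⟩
  have hsub : u - (a • v + b • w) = a • (u - v) + b • (u - w) := by
    obtain rfl := eq_sub_of_add_eq hab
    module
  rw [hsub]
  exact add_mem (PointedCone.smul_mem _ ha hvu) (PointedCone.smul_mem _ hb hwu)

lemma isExtreme_minimalFace : IsExtreme 𝕜 P (minimalFace 𝕜 P u) := by
  refine ⟨sep_subset _ _, fun x hx y hy z hz hxy ↦ ⟨hx, ?_⟩⟩
  obtain ⟨a, b, ha, hb, hab, rfl⟩ := hxy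
  have hsmul : a • (u - x) ∈ feasibleCone 𝕜 P u := by
    convert add_mem hz.2
      ((feasibleCone 𝕜 P u).smul_mem hb.le (sub_mem_feasibleCone hy)) using 1
    obtain rfl := eq_sub_of_add_eq hab
    module
  simpa [ha.ne'] using (feasibleCone 𝕜 P u).smul_mem (inv_nonneg.2 ha.le) hsmul

lemma injOn_minimalFace_of_mem_extremePoints_fiber (hP : Convex 𝕜 P) (p : E →ₗ[𝕜] E') {y : E'}
    (hu : u ∈ (P ∩ p ⁻¹' {y}).extremePoints 𝕜) : InjOn p (minimalFace 𝕜 P u) := by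
  intro v hv w hw hvw
  obtain ⟨⟨huP, huy⟩, hext⟩ := hu
  have hdir {v w : E} (hv : v ∈ P) (hw : w ∈ minimalFace 𝕜 P u) : v - w ∈ feasibleCone 𝕜 P u := by
    simpa using add_mem (sub_mem_feasibleCone hv) hw.2
  obtain ⟨δ, hδ, hδP⟩ := (mem_feasibleCone hP huP).1 (hdir hv.1 hw)
  obtain ⟨ε, hε, hεP⟩ := (mem_feasibleCone hP huP).1 (hdir hw.1 hv)
  have hmem : u ∈ openSegment 𝕜 (u + δ • (v - w)) (u + ε • (w - v)) := by
    refine ⟨ε / (δ + ε), δ / (δ + ε), by positivity, by positivity, by field_simp; ring, ?_⟩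
    match_scalars <;> field_simp <;> ring
  have hfix : u + δ • (v - w) = u :=
    hext ⟨hδP, by simpa [hvw] using huy⟩ ⟨hεP, by simpa [hvw] using huy⟩ hmem
  simpa [hδ.ne', sub_eq_zero] using hfix

end MinimalFace

section IsExtreme

variable {𝕜 E : Type*} [Field 𝕜] [LinearOrder 𝕜] [IsStrictOrderedRing 𝕜] [AddCommGroup E]
  [Module 𝕜 E] {s F P : Set E}

lemma convexHull_sdiff_subset_of_isExtreme (hF : IsExtreme 𝕜 (convexHull 𝕜 s) F) :
    convexHull 𝕜 (s \ F) ⊆ convexHull 𝕜 s \ F :=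
  convexHull_min (sdiff_subset_sdiff_left (subset_convexHull 𝕜 s))
    (hF.convex_sdiff (convex_convexHull 𝕜 s))

lemma convexHull_inter_eq_of_isExtreme (hF : IsExtreme 𝕜 (convexHull 𝕜 s) F)
    (hFc : Convex 𝕜 F) : convexHull 𝕜 (s ∩ F) = F := by
  refine (convexHull_min inter_subset_right hFc).antisymm fun x hx ↦ ?_
  have hout := convexHull_sdiff_subset_of_isExtreme hF
  have hxs : x ∈ convexHull 𝕜 ((s ∩ F) ∪ (s \ F)) := by
    rw [inter_union_sdiff]; exact hF.subset hx
  obtain hin | hin := (s ∩ F).eq_empty_or_nonempty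
  · rw [hin, empty_union] at hxs
    exact absurd hx (hout hxs).2
  obtain hso | hso := (s \ F).eq_empty_or_nonempty
  · rwa [hso, union_empty] at hxs
  rw [convexHull_union hin hso, mem_convexJoin] at hxs
  obtain ⟨y, hy, z, hz, hxyz⟩ := hxs
  obtain rfl | rfl | hopen := by
    simpa only [← insert_endpoints_openSegment, mem_insert_iff] using hxyz
  · exact hy
  · exact absurd hx (hout hz).2
  · exact absurd (hF.right_mem_of_mem_openSegment (convexHull_mono inter_subset_left hy)
      (hout hz).1 hx hopen) (hout hz).2

lemma exists_pos_smul_sub_of_mem_vectorSpan (hF : Convex 𝕜 F) (hne : F.Nonempty) {x : E}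
    (hx : x ∈ vectorSpan 𝕜 F) : ∃ r : 𝕜, 0 < r ∧ ∃ a ∈ F, ∃ b ∈ F, x = r • (b - a) := by
  obtain ⟨c, hc⟩ := hne
  induction hx using Submodule.span_induction with
  | mem x hx =>
    obtain ⟨b, hb, a, ha, rfl⟩ := mem_vsub.1 hx
    exact ⟨1, one_pos, a, ha, b, hb, by simp⟩
  | zero => exact ⟨1, one_pos, c, hc, c, hc, by simp⟩
  | add x y _ _ hx hy =>
    obtain ⟨r, hr, a, ha, b, hb, rfl⟩ := hx
    obtain ⟨r', hr', a', ha', b', hb', rfl⟩ := hy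
    have hcomb {v w : E} (hv : v ∈ F) (hw : w ∈ F) :
        (r / (r + r')) • v + (r' / (r + r')) • w ∈ F :=
      hF hv hw (by positivity) (by positivity) (by field_simp)
    refine ⟨r + r', add_pos hr hr', _, hcomb ha ha', _, hcomb hb hb', ?_⟩
    match_scalars <;> field_simp
  | smul k x _ hx =>
    obtain ⟨r, hr, a, ha, b, hb, rfl⟩ := hx
    obtain hk | rfl | hk := lt_trichotomy k 0
    · exact ⟨-k * r, mul_pos (neg_pos.2 hk) hr, b, hb, a, ha, by module⟩
    · exact ⟨1, one_pos, c, hc, c, hc, by simp⟩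
    · exact ⟨k * r, mul_pos hk hr, a, ha, b, hb, by module⟩

lemma affineSpan_inter_eq_of_isExtreme (hF : IsExtreme 𝕜 P F) (hFc : Convex 𝕜 F) :
    (affineSpan 𝕜 F : Set E) ∩ P = F := by
  refine Subset.antisymm ?_ (subset_inter (subset_affineSpan 𝕜 F) hF.subset)
  rintro y ⟨hy, hyP⟩
  obtain ⟨c, hc⟩ : F.Nonempty := (affineSpan_nonempty 𝕜).1 ⟨y, hy⟩
  have hyc : y - c ∈ vectorSpan 𝕜 F := by
    simpa [direction_affineSpan] using
      AffineSubspace.vsub_mem_direction hy (subset_affineSpan 𝕜 F hc)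
  obtain ⟨r, hr, a, ha, b, hb, hyr⟩ := exists_pos_smul_sub_of_mem_vectorSpan hFc ⟨c, hc⟩ hyc
  obtain rfl := eq_add_of_sub_eq hyr
  have hz : (1 / (1 + r)) • c + (r / (1 + r)) • b ∈ F :=
    hFc hc hb (by positivity) (by positivity) (by field_simp)
  refine hF.left_mem_of_mem_openSegment hyP (hF.subset ha) hz
    ⟨1 / (1 + r), r / (1 + r), by positivity, by positivity, by field_simp, ?_⟩
  match_scalars <;> field_simp
  ring

end IsExtreme

lemma eq_of_forall_mem_affineSubspace_lt {𝕜 E : Type*} [Field 𝕜] [LinearOrder 𝕜]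
    [AddCommGroup E] [Module 𝕜 E] {A : AffineSubspace 𝕜 E} (f : E →ₗ[𝕜] 𝕜) {b : 𝕜}
    (hb : ∀ x ∈ A, b < f x) {x y : E} (hx : x ∈ A) (hy : y ∈ A) : f x = f y := by
  by_contra hne
  have hsub : f y - f x ≠ 0 := sub_ne_zero.2 (Ne.symm hne)
  have hlt := hb _ (AffineMap.lineMap_mem ((b - f x) / (f y - f x)) hx hy)
  simp [AffineMap.lineMap_apply, hsub] at hlt

section Exposed

variable {E E' : Type*} [AddCommGroup E] [Module ℝ E] [TopologicalSpace E]
  [AddCommGroup E'] [Module ℝ E'] [TopologicalSpace E'] {s F : Set E}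

lemma isExposed_inter_preimage {P : Set E} {G : Set E'} (p : E →L[ℝ] E')
    (hG : IsExposed ℝ (p '' P) G) : IsExposed ℝ P (P ∩ p ⁻¹' G) := by
  rintro ⟨x, -, hx⟩
  obtain ⟨m, rfl⟩ := hG ⟨p x, hx⟩
  refine ⟨m.comp p, ?_⟩
  ext z
  simp only [mem_inter_iff, mem_preimage, mem_ofPred_eq, forall_mem_image]
  exact ⟨fun hz ↦ ⟨hz.1, hz.2.2⟩, fun hz ↦ ⟨hz.1, mem_image_of_mem p hz.1, hz.2⟩⟩

lemma eq_convexHull_of_isExposed_of_centroid_mem_s7 {s : Finset E}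
    (hF : IsExposed ℝ (convexHull ℝ (s : Set E)) F) (hc : s.centroid ℝ id ∈ F) :
    F = convexHull ℝ (s : Set E) := by
  refine hF.subset.antisymm (convexHull_min (fun v hv ↦ ?_) (hF.convex (convex_convexHull ℝ _)))
  have hw : ∑ x ∈ s, s.centroidWeights ℝ x = 1 :=
    s.sum_centroidWeights_eq_one_of_nonempty ℝ ⟨v, hv⟩
  obtain ⟨m, rfl⟩ := hF ⟨_, hc⟩
  have hle : ∀ x ∈ s, m x ≤ m (s.centroid ℝ id) := fun x hx ↦ hc.2 x (subset_convexHull ℝ _ hx)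
  have hsum : ∑ x ∈ s, s.centroidWeights ℝ x * m x =
      ∑ x ∈ s, s.centroidWeights ℝ x * m (s.centroid ℝ id) := by
    rw [← Finset.sum_mul, hw, one_mul, s.centroid_eq_centerMass ⟨v, hv⟩,
      Finset.centerMass_eq_of_sum_1 _ _ hw]
    simp only [map_sum, map_smul, smul_eq_mul, id_eq]
  have hpos : 0 < s.centroidWeights ℝ v := by
    simpa using Finset.card_pos.2 ⟨v, hv⟩
  have heq : m v = m (s.centroid ℝ id) :=
    mul_left_cancel₀ hpos.ne' ((Finset.sum_eq_sum_iff_of_le fun x hx ↦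
      mul_le_mul_of_nonneg_left (hle x hx) (by simp)).1 hsum v hv)
  exact ⟨subset_convexHull ℝ _ hv, fun y hy ↦ (hc.2 y hy).trans_eq heq.symm⟩

variable [IsTopologicalAddGroup E] [ContinuousSMul ℝ E]

lemma isClosed_affineSpan_of_finite [T2Space E] (hs : s.Finite) :
    IsClosed (affineSpan ℝ s : Set E) := by
  have := finiteDimensional_direction_affineSpan_of_finite ℝ hs
  exact (affineSpan ℝ s).isClosed_direction_iff.1 (Submodule.closed_of_finiteDimensional _)

variable [LocallyConvexSpace ℝ E]

lemma exists_eq_const_and_lt_of_disjoint {A : AffineSubspace ℝ E} {K : Set E}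
    (hA : IsClosed (A : Set E)) (hKc : Convex ℝ K) (hK : IsCompact K)
    (hAK : Disjoint K A) :
    ∃ (f : StrongDual ℝ E) (c : ℝ), (∀ x ∈ A, f x = c) ∧ ∀ x ∈ K, f x < c := by
  obtain rfl | ⟨y, hy⟩ := A.eq_bot_or_nonempty
  · exact ⟨0, 1, fun x hx ↦ (AffineSubspace.notMem_bot ℝ E x hx).elim, by simp⟩
  obtain ⟨f, a, b, hfK, hab, hfA⟩ :=
    geometric_hahn_banach_compact_closed hKc hK A.convex hA hAK
  exact ⟨f, f y, fun x hx ↦ eq_of_forall_mem_affineSubspace_lt f.toLinearMap hfA hx hy,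
    fun x hx ↦ (hfK x hx).trans (hab.trans (hfA y hy))⟩

variable [T2Space E]

lemma isExposed_of_isExtreme (hs : s.Finite)
    (hF : IsExtreme ℝ (convexHull ℝ s) F) (hFc : Convex ℝ F) :
    IsExposed ℝ (convexHull ℝ s) F := by
  rintro ⟨y, hy⟩
  have hclosed : IsClosed (affineSpan ℝ F : Set E) := by
    rw [← convexHull_inter_eq_of_isExtreme hF hFc, affineSpan_convexHull]
    exact isClosed_affineSpan_of_finite (hs.inter_of_left F)
  have hout := convexHull_sdiff_subset_of_isExtreme hF
  have hdisj : Disjoint (convexHull ℝ (s \ F)) (affineSpan ℝ F) :=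
    disjoint_left.2 fun x hx hxF ↦ (hout hx).2 <|
      (affineSpan_inter_eq_of_isExtreme hF hFc).subset ⟨hxF, (hout hx).1⟩
  obtain ⟨f, c, hfF, hfs⟩ := exists_eq_const_and_lt_of_disjoint hclosed
    (convex_convexHull ℝ _) (hs.sdiff.isCompact_convexHull ℝ) hdisj
  replace hfF : ∀ x ∈ F, f x = c := fun x hx ↦ hfF x (subset_affineSpan ℝ F hx)
  replace hfs : ∀ x ∈ s \ F, f x < c := fun x hx ↦ hfs x (subset_convexHull ℝ _ hx)
  have hle : ∀ x ∈ convexHull ℝ s, f x ≤ c :=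
    convexHull_min (fun x hx ↦ by
      by_cases hxF : x ∈ F
      · exact (hfF x hxF).le
      · exact (hfs x ⟨hx, hxF⟩).le) (convex_halfSpace_le f.isLinear c)
  have hexp : IsExposed ℝ (convexHull ℝ s) (f.toExposed (convexHull ℝ s)) :=
    ContinuousLinearMap.toExposed.isExposed
  have hvert : s ∩ f.toExposed (convexHull ℝ s) ⊆ F := by
    rintro x ⟨hxs, -, hmax⟩
    by_contra hxF
    exact ((hfs x ⟨hxs, hxF⟩).trans_eq (hfF y hy).symm).not_ge (hmax y (hF.subset hy))
  refine ⟨f, Subset.antisymm (fun x hx ↦ ⟨hF.subset hx, fun z hz ↦ ?_⟩) ?_⟩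
  · exact (hle z hz).trans_eq (hfF x hx).symm
  · exact (convexHull_inter_eq_of_isExtreme hexp.isExtreme
      (hexp.convex (convex_convexHull ℝ s))).symm.trans_subset (convexHull_min hvert hFc)

lemma isExposed_minimalFace (hs : s.Finite) (u : E) :
    IsExposed ℝ (convexHull ℝ s) (minimalFace ℝ (convexHull ℝ s) u) :=
  isExposed_of_isExtreme hs isExtreme_minimalFace (convex_minimalFace (convex_convexHull ℝ s))

lemma exists_isExposed_injOn_mem_image [T1Space E'] (hs : s.Finite) (p : E →L[ℝ] E') {y : E'}
    (hy : y ∈ p '' convexHull ℝ s) :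
    ∃ F, IsExposed ℝ (convexHull ℝ s) F ∧ InjOn p F ∧ y ∈ p '' F := by
  have hfiber : IsCompact (convexHull ℝ s ∩ p ⁻¹' {y}) :=
    (hs.isCompact_convexHull ℝ).inter_right (isClosed_singleton.preimage p.continuous)
  obtain ⟨u, hu⟩ := hfiber.extremePoints_nonempty hy
  exact ⟨minimalFace ℝ (convexHull ℝ s) u, isExposed_minimalFace hs u,
    injOn_minimalFace_of_mem_extremePoints_fiber (convex_convexHull ℝ s) p.toLinearMap hu,
    u, self_mem_minimalFace hu.1.1, hu.1.2⟩

theorem pf_property_face_iso_general [T1Space E'] (hs : s.Finite) (p : E →L[ℝ] E')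
    (hPF : ∀ F, IsExposed ℝ (convexHull ℝ s) F → IsExposed ℝ (p '' convexHull ℝ s) (p '' F)) :
    ∃ F, IsExposed ℝ (convexHull ℝ s) F ∧ InjOn p F ∧ p '' F = p '' convexHull ℝ s := by
  lift s to Finset E using hs
  obtain rfl | hne := s.eq_empty_or_nonempty
  · exact ⟨∅, isExposed_empty, injOn_empty p, by simp⟩
  have hc := s.centroid_mem_convexHull (R := ℝ) hne
  obtain ⟨F, hF, hinj, hcF⟩ :=
    exists_isExposed_injOn_mem_image s.finite_toSet p (mem_image_of_mem p hc)
  have heq := eq_convexHull_of_isExposed_of_centroid_mem_s7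
    (isExposed_inter_preimage p (hPF F hF)) ⟨hc, hcF⟩
  exact ⟨F, hF, hinj, (image_mono hF.subset).antisymm (image_subset_iff.2 (inter_eq_left.1 heq))⟩

end Exposed

/-- If the pair `(P, p_x)` has the PF-property, then some face `F` of the polytope `P` is mapped
by `p_x` affinely isomorphically onto `p_x(P)`; in particular `p_x` is injective on `F` and
`p_x(F) = p_x(P)`. -/
theorem pf_property_face_iso {n d : ℕ}
    (P : Set ((Fin n → ℝ) × (Fin d → ℝ)))
    (hP : ∃ s : Set ((Fin n → ℝ) × (Fin d → ℝ)), s.Finite ∧ P = convexHull ℝ s)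
    (hPF : ∀ F : Set ((Fin n → ℝ) × (Fin d → ℝ)),
        IsExposed ℝ P F → IsExposed ℝ (Prod.fst '' P) (Prod.fst '' F)) :
    ∃ F : Set ((Fin n → ℝ) × (Fin d → ℝ)),
      IsExposed ℝ P F ∧ Set.InjOn Prod.fst F ∧ Prod.fst '' F = Prod.fst '' P := by
  obtain ⟨s, hs, rfl⟩ := hP
  exact pf_property_face_iso_general hs (.fst ℝ _ _) hPF
end
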